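/- Let (𝔤,[-,-]₁,[-,-]₂) be a finite-dimensional compatible Lie algebra over ℂ and B a nondegenerate symmetric bilinear form on 𝔤 that is a commutative 2-cocycle on both (𝔤,[-,-]₁) and (𝔤,[-,-]₂). Then there exist (unique) bilinear operations ∘ and ∗ on 𝔤 satisfying B(x∘y, z) = B(y, [x,z]₁) and B(x∗y, z) = B(y, [x,z]₂) for all x,y,z ∈ 𝔤, and (𝔤,∘,∗) is a compatible anti-pre-Lie algebra whose commutators recover the brackets: x∘y−y∘x = [x,y]₁ and x∗y−y∗x = [x,y]₂. -/

import Mathlib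

/-- An anti-pre-Lie algebra structure. -/
def IsAntiPreLie {A : Type*} [AddCommGroup A] [Module ℂ A]
    (m : A →ₗ[ℂ] A →ₗ[ℂ] A) : Prop :=
  (∀ x y z : A, m x (m y z) - m y (m x z) = m (m y x - m x y) z) ∧
  (∀ x y z : A, m (m x y - m y x) z + m (m y z - m z y) x + m (m z x - m x z) y = 0)

/-- A bilinear operation is a Lie bracket. -/
def IsLieBr {g : Type*} [AddCommGroup g] [Module ℂ g]
    (b : g →ₗ[ℂ] g →ₗ[ℂ] g) : Prop :=
  (∀ x y : g, b x y = -b y x) ∧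
  (∀ x y z : g, b (b x y) z + b (b y z) x + b (b z x) y = 0)

/-!
In the product attached to a bracket, left multiplication by `x` is the `B`-adjoint of `[x, ·]`.
Nondegeneracy makes this adjoint exist and be unique, so the product depends linearly on the
bracket and compatibility reduces to the case of one bracket. There the cocycle identity says that
the commutator is the bracket, and the first anti-pre-Lie identity is the Jacobi identity after
taking adjoints. For the second one, two applications of the cocycle identity show that the cyclic
sum of `B z [[x, y], w]` over `x, y, z` equals its own negative.
-/

section GeneralScalars

variable {R M : Type*} [CommRing R] [AddCommGroup M] [Module R M]

/-- A Lie bracket on a module over an arbitrary commutative ring, given as a bilinear map;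
over `ℂ` this unfolds to `IsLieBr`. Skew-symmetry stands in for `b x x = 0`, to which it is
equivalent when `2` acts injectively on `M`. -/
def IsLieBracket (b : M →ₗ[R] M →ₗ[R] M) : Prop :=
  (∀ x y, b x y = -b y x) ∧ (∀ x y z, b (b x y) z + b (b y z) x + b (b z x) y = 0)

/-- An anti-pre-Lie product on a module over an arbitrary commutative ring; over `ℂ` this unfolds
to `IsAntiPreLie`. -/
def IsAntiPreLieProduct (m : M →ₗ[R] M →ₗ[R] M) : Prop :=
  (∀ x y z, m x (m y z) - m y (m x z) = m (m y x - m x y) z) ∧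
  (∀ x y z, m (m x y - m y x) z + m (m y z - m z y) x + m (m z x - m x z) y = 0)

/-- A commutative 2-cocycle `B` on the algebra with bracket `b`. -/
structure IsCommTwoCocycle (b : M →ₗ[R] M →ₗ[R] M) (B : M →ₗ[R] M →ₗ[R] R) : Prop where
  symm : ∀ x y, B x y = B y x
  cyclic_sum : ∀ x y z, B (b x y) z + B (b y z) x + B (b z x) y = 0

/-- The product `m` attached to a bracket `b` and a perfect pairing `B`, determined by
`B (m x y) z = B y (b x z)`: left multiplication by `x` is the transpose of `b x`, carried
from the dual of `M` back to `M`. -/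
noncomputable def adjointProduct (B : M →ₗ[R] M →ₗ[R] R) [B.IsPerfPair]
    (b : M →ₗ[R] M →ₗ[R] M) : M →ₗ[R] M →ₗ[R] M :=
  B.toPerfPair.symm.conj.toLinearMap ∘ₗ Module.Dual.transpose ∘ₗ b

variable {B : M →ₗ[R] M →ₗ[R] R} {b b₁ b₂ m m' : M →ₗ[R] M →ₗ[R] M}

theorem isAdjointPair_adjointProduct [B.IsPerfPair] (b : M →ₗ[R] M →ₗ[R] M) (x : M) :
    B.IsAdjointPair B (adjointProduct B b x) (b x) := fun y z ↦ by
  simp [adjointProduct, LinearEquiv.conj_apply, Module.Dual.transpose_apply]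

theorem eq_of_isAdjointPair (hB : Function.Injective B)
    (hm : ∀ x, B.IsAdjointPair B (m x) (b x)) (hm' : ∀ x, B.IsAdjointPair B (m' x) (b x)) :
    m = m' :=
  LinearMap.ext₂ fun x y ↦ hB <| LinearMap.ext fun z ↦ (hm x y z).trans (hm' x y z).symm

theorem IsLieBracket.bracket_bracket (hb : IsLieBracket b) (x y z : M) :
    b (b x y) z = b x (b y z) - b y (b x z) := by
  have jacobi := hb.2 x y z
  rw [hb.1 (b y z) x, hb.1 (b z x) y, hb.1 z x, map_neg, neg_neg] at jacobi
  rw [← sub_eq_zero, ← jacobi]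
  abel

namespace IsCommTwoCocycle

protected theorem add (h₁ : IsCommTwoCocycle b₁ B) (h₂ : IsCommTwoCocycle b₂ B) :
    IsCommTwoCocycle (b₁ + b₂) B where
  symm := h₁.symm
  cyclic_sum x y z := by
    simp only [LinearMap.add_apply, map_add]
    linear_combination h₁.cyclic_sum x y z + h₂.cyclic_sum x y z

protected theorem smul (k : R) (h : IsCommTwoCocycle b B) : IsCommTwoCocycle (k • b) B where
  symm := h.symm
  cyclic_sum x y z := by
    simp only [LinearMap.smul_apply, map_smul, smul_eq_mul]
    linear_combination k * h.cyclic_sum x y z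

theorem apply_bracket (h : IsCommTwoCocycle b B) (hskew : ∀ x y, b x y = -b y x) (x y z : M) :
    B (b x y) z = B y (b x z) - B x (b y z) := by
  have cocycle := h.cyclic_sum x y z
  rw [hskew z x, map_neg, LinearMap.neg_apply, h.symm (b y z), h.symm (b x z)] at cocycle
  linear_combination cocycle

theorem cyclic_sum_apply_bracket_bracket (h : IsCommTwoCocycle b B) (hb : IsLieBracket b)
    (h2 : IsLeftRegular (2 : R)) (x y z w : M) :
    B z (b (b x y) w) + B x (b (b y z) w) + B y (b (b z x) w) = 0 := by
  have jacobi : B (b (b x y) z) w + B (b (b y z) x) w + B (b (b z x) y) w = 0 := by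
    simpa using congr(B $(hb.2 x y z) w)
  have pull_left (u v t : M) : B t (b (b u v) w) = B (b u v) (b t w) + B (b (b u v) t) w := by
    rw [h.apply_bracket hb.1 (b u v) t w]
    ring
  have pull_right (u v t : M) :
      B (b u v) (b t w) = B v (b u (b t w)) - B u (b v (b t w)) :=
    h.apply_bracket hb.1 u v (b t w)
  have sum_eq_sum_brackets :
      B z (b (b x y) w) + B x (b (b y z) w) + B y (b (b z x) w) =
        B (b x y) (b z w) + B (b y z) (b x w) + B (b z x) (b y w) := by
    linear_combination pull_left x y z + pull_left y z x + pull_left z x y + jacobi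
  have sum_brackets_eq_neg_sum :
      B (b x y) (b z w) + B (b y z) (b x w) + B (b z x) (b y w) =
        -(B z (b (b x y) w) + B x (b (b y z) w) + B y (b (b z x) w)) := by
    simp only [pull_right, hb.bracket_bracket, map_sub]
    ring
  refine h2.mul_left_eq_zero_iff.mp ?_
  linear_combination sum_eq_sum_brackets + sum_brackets_eq_neg_sum

theorem commutator_eq_bracket (h : IsCommTwoCocycle b B) (hskew : ∀ x y, b x y = -b y x)
    (hB : Function.Injective B) (hm : ∀ x, B.IsAdjointPair B (m x) (b x)) (x y : M) :
    m x y - m y x = b x y := by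
  refine hB (LinearMap.ext fun z ↦ ?_)
  rw [map_sub, LinearMap.sub_apply, hm x y z, hm y x z, h.apply_bracket hskew]

theorem isAntiPreLieProduct (h : IsCommTwoCocycle b B) (hb : IsLieBracket b)
    (h2 : IsLeftRegular (2 : R)) (hB : Function.Injective B)
    (hm : ∀ x, B.IsAdjointPair B (m x) (b x)) : IsAntiPreLieProduct m := by
  have commutator := h.commutator_eq_bracket hb.1 hB hm
  refine ⟨fun x y z ↦ hB (LinearMap.ext fun w ↦ ?_), fun x y z ↦ hB (LinearMap.ext fun w ↦ ?_)⟩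
  · calc B (m x (m y z) - m y (m x z)) w
        = B z (b y (b x w)) - B z (b x (b y w)) := by
          rw [map_sub, LinearMap.sub_apply, hm x, hm y, hm y, hm x]
      _ = B z (b (b y x) w) := by rw [hb.bracket_bracket, map_sub]
      _ = B (m (m y x - m x y) z) w := by rw [commutator, hm]
  · calc B (m (m x y - m y x) z + m (m y z - m z y) x + m (m z x - m x z) y) w
        = B z (b (b x y) w) + B x (b (b y z) w) + B y (b (b z x) w) := by
          simp only [commutator, map_add, LinearMap.add_apply, (hm _ _ _ : B (m _ _) _ = _)]
      _ = 0 := h.cyclic_sum_apply_bracket_bracket hb h2 x y z w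
      _ = B 0 w := by rw [map_zero, LinearMap.zero_apply]

end IsCommTwoCocycle

theorem nondegenerate_commutative_two_cocycle_gives_compatible_antiPreLie_general
    (h2 : IsLeftRegular (2 : R)) (hcompat : ∀ k₁ k₂ : R, IsLieBracket (k₁ • b₁ + k₂ • b₂))
    [B.IsPerfPair] (hcoc₁ : IsCommTwoCocycle b₁ B) (hcoc₂ : IsCommTwoCocycle b₂ B) :
    ∃ c s : M →ₗ[R] M →ₗ[R] M,
      (∀ x y z, B (c x y) z = B y (b₁ x z)) ∧
      (∀ x y z, B (s x y) z = B y (b₂ x z)) ∧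
      (∀ c' : M →ₗ[R] M →ₗ[R] M, (∀ x y z, B (c' x y) z = B y (b₁ x z)) → c' = c) ∧
      (∀ s' : M →ₗ[R] M →ₗ[R] M, (∀ x y z, B (s' x y) z = B y (b₂ x z)) → s' = s) ∧
      (∀ k₁ k₂ : R, IsAntiPreLieProduct (k₁ • c + k₂ • s)) ∧
      (∀ x y, c x y - c y x = b₁ x y) ∧
      (∀ x y, s x y - s y x = b₂ x y) := by
  have hB : Function.Injective B := (LinearMap.IsPerfPair.bijective_left B).injective
  have hb₁ : IsLieBracket b₁ := by simpa using hcompat 1 0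
  have hb₂ : IsLieBracket b₂ := by simpa using hcompat 0 1
  have hc := isAdjointPair_adjointProduct (B := B) b₁
  have hs := isAdjointPair_adjointProduct (B := B) b₂
  refine ⟨adjointProduct B b₁, adjointProduct B b₂, hc, hs,
    fun _ hc' ↦ eq_of_isAdjointPair hB hc' hc, fun _ hs' ↦ eq_of_isAdjointPair hB hs' hs,
    fun k₁ k₂ ↦ ?_, hcoc₁.commutator_eq_bracket hb₁.1 hB hc,
    hcoc₂.commutator_eq_bracket hb₂.1 hB hs⟩
  exact ((hcoc₁.smul k₁).add (hcoc₂.smul k₂)).isAntiPreLieProduct (hcompat k₁ k₂) h2 hB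
    fun x ↦ ((hc x).smul k₁).add ((hs x).smul k₂)

end GeneralScalars

theorem isPerfPair_of_symm_of_separatingLeft {K V : Type*} [Field K] [AddCommGroup V] [Module K V]
    [FiniteDimensional K V] {B : V →ₗ[K] V →ₗ[K] K} (hsym : ∀ x y, B x y = B y x)
    (hnd : B.SeparatingLeft) : B.IsPerfPair := by
  have hB : Function.Injective B :=
    LinearMap.ker_eq_bot.mp (LinearMap.separatingLeft_iff_ker_eq_bot.mp hnd)
  have flip_eq : B.flip = B := LinearMap.ext₂ fun x y ↦ hsym y x
  exact .of_injective hB (flip_eq.symm ▸ hB)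

/-- Let `(g,b₁,b₂)` be a finite-dimensional compatible Lie algebra over
`ℂ` and `B` a nondegenerate symmetric bilinear form which is a commutative 2-cocycle
on both brackets. Then there exist unique bilinear operations `∘ = c`, `∗ = s` with
`B(x∘y,z) = B(y,[x,z]₁)` and `B(x∗y,z) = B(y,[x,z]₂)`, and `(g,∘,∗)` is a compatible
anti-pre-Lie algebra whose commutators recover the brackets. -/
theorem nondegenerate_commutative_two_cocycle_gives_compatible_antiPreLie
    {g : Type*} [AddCommGroup g] [Module ℂ g] [FiniteDimensional ℂ g]
    (b₁ b₂ : g →ₗ[ℂ] g →ₗ[ℂ] g)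
    (hcompat : ∀ k₁ k₂ : ℂ, IsLieBr (k₁ • b₁ + k₂ • b₂))
    (B : g →ₗ[ℂ] g →ₗ[ℂ] ℂ)
    (hsym : ∀ x y : g, B x y = B y x)
    (hnd : ∀ x : g, (∀ y : g, B x y = 0) → x = 0)
    (hcoc₁ : ∀ x y z : g, B (b₁ x y) z + B (b₁ y z) x + B (b₁ z x) y = 0)
    (hcoc₂ : ∀ x y z : g, B (b₂ x y) z + B (b₂ y z) x + B (b₂ z x) y = 0) :
    ∃ c s : g →ₗ[ℂ] g →ₗ[ℂ] g,
      (∀ x y z : g, B (c x y) z = B y (b₁ x z)) ∧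
      (∀ x y z : g, B (s x y) z = B y (b₂ x z)) ∧
      (∀ c' : g →ₗ[ℂ] g →ₗ[ℂ] g, (∀ x y z : g, B (c' x y) z = B y (b₁ x z)) → c' = c) ∧
      (∀ s' : g →ₗ[ℂ] g →ₗ[ℂ] g, (∀ x y z : g, B (s' x y) z = B y (b₂ x z)) → s' = s) ∧
      (∀ k₁ k₂ : ℂ, IsAntiPreLie (k₁ • c + k₂ • s)) ∧
      (∀ x y : g, c x y - c y x = b₁ x y) ∧
      (∀ x y : g, s x y - s y x = b₂ x y) := by
  have : B.IsPerfPair := isPerfPair_of_symm_of_separatingLeft hsym hnd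
  exact nondegenerate_commutative_two_cocycle_gives_compatible_antiPreLie_general
    (IsRegular.of_ne_zero two_ne_zero).left hcompat ⟨hsym, hcoc₁⟩ ⟨hsym, hcoc₂⟩
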